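/- Lemma 6: Let U₃ = η₂ + 2η₃ + 3η₀. If d > 3 is a prime divisor of gcd(U₃, (4^p − 1)/3), then either d = 11, or d = 1 + 2p and 3p = 4(3−4y)² + 83. -/

import Mathlib

open Finset

/-- The cyclotomic class `D_i` of order 4 modulo `p` with respect to the
primitive root `θ`: `{θ^(i+4j) mod p : 0 ≤ j < (p-1)/4}`. -/
def cycD (p θ i : ℕ) : Finset ℕ :=
  (Finset.range ((p - 1) / 4)).image fun j => θ ^ (i + 4 * j) % p

/-- `η_i = Σ_{t ∈ D_i} 4^t` as an integer. -/
def eta4 (p θ : ℕ) (i : ℕ) : ℤ := ∑ t ∈ cycD p θ i, (4 : ℤ) ^ t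

/-- `H = η₀ + η₂ − η₁ − η₃`. -/
def Hval (p θ : ℕ) : ℤ := eta4 p θ 0 + eta4 p θ 2 - eta4 p θ 1 - eta4 p θ 3

/-!
Let `χ` be the quartic character of `ZMod p` with `χ θ = i`. Expanding the cyclotomic number
`(0, 1)₄` in Jacobi sums, the normalisation of `y` says exactly that `im (jacobiSum χ χ) = 2 * y`.
If a prime `q > 3` divides `4 ^ p - 1`, then `4` is a primitive `p`-th root of unity modulo `q`, so
`η₀, …, η₃` reduce to Gaussian periods in characteristic `q`. These satisfy the classical quadratic
relations, in which `y` enters through `J(χ, χ)`, and together with `U₃ ≡ 0` they force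
`(5 * p + 9) ^ 2 ≡ 4 * (3 - 4 * y) ^ 2 * p` modulo `q`.

Moreover `q = 1 + 2 * k * p`, with `k ≠ 2` because `2` would otherwise be both a square and a
nonsquare modulo `q`. The cofactor of `q` in `(5 * p + 9) ^ 2 - 4 * (3 - 4 * y) ^ 2 * p` is of the
form `81 + j * p` with `j ≡ 3` modulo `8`. For `j > 0` comparing sizes leaves only
`(j, k) = (11, 1)` and a few cases with `j = 3`, which are impossible modulo `3` or `7`; for
`j < 0` it leaves only `p = 5` and `p = 13`.
-/

section JacobiSums

variable {F R : Type*} [Field F] [Fintype F] [CommRing R]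

lemma jacobiSum_inv_mul_right (χ φ : MulChar F R) :
    jacobiSum χ (χ * φ)⁻¹ = χ (-1) * jacobiSum χ φ := by
  classical
  -- Substitute `u ↦ u / (u - 1)`, an involution of `F \ {0, 1}`.
  rw [jacobiSum_eq_sum_sdiff, jacobiSum_eq_sum_sdiff, mul_sum]
  have mem_iff (u : F) : u ∈ (univ \ {0, 1} : Finset F) ↔ u ≠ 0 ∧ u - 1 ≠ 0 := by
    simp [sub_eq_zero]
  have sub_one {u : F} (hu : u - 1 ≠ 0) : u / (u - 1) - 1 = (u - 1)⁻¹ := by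
    field_simp
    ring
  have mapsTo : ∀ u ∈ (univ \ {0, 1} : Finset F), u / (u - 1) ∈ (univ \ {0, 1} : Finset F) := by
    intro u hu
    obtain ⟨h0, h1⟩ := (mem_iff u).mp hu
    exact (mem_iff _).mpr ⟨div_ne_zero h0 h1, by rw [sub_one h1]; exact inv_ne_zero h1⟩
  have involutive : ∀ u ∈ (univ \ {0, 1} : Finset F), u / (u - 1) / (u / (u - 1) - 1) = u := by
    intro u hu
    have h1 := ((mem_iff u).mp hu).2
    rw [sub_one h1, div_inv_eq_mul, div_mul_cancel₀ u h1]
  refine sum_nbij' _ _ mapsTo mapsTo involutive involutive fun u hu ↦ ?_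
  have h1 := ((mem_iff u).mp hu).2
  have hdiv : u / (u - 1) = -1 * u * (1 - u)⁻¹ := by
    rw [← neg_sub 1 u, div_neg, div_eq_mul_inv]; ring
  have hsub : 1 - u / (u - 1) = (1 - u)⁻¹ := by
    rw [← neg_sub, sub_one h1, ← neg_sub u 1, inv_neg]
  have hneg : χ (-1) * χ (-1) = 1 := by rw [← map_mul]; simp
  rw [hsub, hdiv, MulChar.inv_apply', MulChar.mul_apply]
  simp only [map_mul]
  linear_combination (-(χ u * χ (1 - u)⁻¹ * φ (1 - u)⁻¹)) * hneg

lemma jacobiSum_self_sq {χ : MulChar F R} (hχ : χ ^ 4 = 1) :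
    jacobiSum χ (χ ^ 2) = χ (-1) * jacobiSum χ χ := by
  have hsq : (χ * χ)⁻¹ = χ ^ 2 := inv_eq_of_mul_eq_one_left (by rw [← sq, ← pow_add, hχ])
  rw [← hsq, jacobiSum_inv_mul_right]

end JacobiSums

section GaussianInt

variable {F : Type*} [Field F]

lemma inv_apply_eq_star_apply (χ : MulChar F GaussianInt) (a : F) : χ⁻¹ a = star (χ a) := by
  rcases eq_or_ne a 0 with rfl | ha
  · rw [MulChar.map_zero, MulChar.map_zero, star_zero]
  have hu : IsUnit (χ a) := ha.isUnit.map χ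
  have hnorm : (χ a).norm = 1 := (Zsqrtd.norm_eq_one_iff' (by norm_num) _).mpr hu
  apply hu.mul_left_cancel
  rw [← MulChar.mul_apply, mul_inv_cancel, MulChar.one_apply ha.isUnit, ← Zsqrtd.norm_eq_mul_conj,
    hnorm, Int.cast_one]

variable [Fintype F]

lemma jacobiSum_inv_inv_eq_star (χ φ : MulChar F GaussianInt) :
    jacobiSum χ⁻¹ φ⁻¹ = star (jacobiSum χ φ) := by
  simp only [jacobiSum, star_sum, star_mul', inv_apply_eq_star_apply]

lemma norm_jacobiSum {χ φ : MulChar F GaussianInt} (hχ : χ ≠ 1) (hφ : φ ≠ 1) (hχφ : χ * φ ≠ 1) :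
    (jacobiSum χ φ).norm = Fintype.card F := by
  have hinj : Function.Injective GaussianInt.toComplex := fun _ _ ↦ GaussianInt.toComplex_inj.mp
  have hchar : ringChar ℂ ≠ ringChar F := by
    rw [ringChar.eq_zero]; exact (CharP.ringChar_ne_zero_of_finite F).symm
  have hmul := jacobiSum_mul_jacobiSum_inv hchar
    ((MulChar.ringHomComp_ne_one_iff hinj).mpr hχ) ((MulChar.ringHomComp_ne_one_iff hinj).mpr hφ)
    (by rwa [← MulChar.ringHomComp_mul, MulChar.ringHomComp_ne_one_iff hinj])
  rw [MulChar.ringHomComp_inv, MulChar.ringHomComp_inv, jacobiSum_ringHomComp,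
    jacobiSum_ringHomComp, ← map_mul, jacobiSum_inv_inv_eq_star, ← Zsqrtd.norm_eq_mul_conj,
    map_intCast] at hmul
  exact_mod_cast hmul

end GaussianInt

section CyclotomicNumbers

variable {F R : Type*} [Field F] [CommRing R] [IsDomain R] [DecidableEq R]
  {χ : MulChar F R} {e : ℕ}

lemma sum_range_pow_mul_pow_apply {α : R} (hχ : χ ^ e = 1) (hα : α ^ e = 1) (a : F) :
    ∑ k ∈ range e, α ^ k * (χ ^ k) a = if α * χ a = 1 then (e : R) else 0 := by
  rcases eq_or_ne a 0 with rfl | ha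
  · simp only [MulChar.map_zero, mul_zero, sum_const_zero, zero_ne_one, if_false]
  lift a to Fˣ using ha.isUnit
  have hpow : (α * χ a) ^ e = 1 := by
    rw [mul_pow, hα, ← MulChar.pow_apply_coe, hχ, MulChar.one_apply_coe, one_mul]
  simp_rw [MulChar.pow_apply_coe, ← mul_pow]
  split_ifs with h
  · simp [h]
  · refine (mul_eq_zero.mp ?_).resolve_left (sub_ne_zero.mpr h)
    rw [mul_geom_sum, hpow, sub_self]

variable [Fintype F]

lemma sq_mul_card_filter_eq_sum_jacobiSum {α β : R} (hχ : χ ^ e = 1) (hα : α ^ e = 1)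
    (hβ : β ^ e = 1) :
    (e : R) ^ 2 * #{a : F | α * χ a = 1 ∧ β * χ (a + 1) = 1} =
      ∑ m ∈ range e, ∑ n ∈ range e,
        α ^ m * β ^ n * (χ ^ m) (-1) * jacobiSum (χ ^ m) (χ ^ n) := by
  calc (e : R) ^ 2 * #{a : F | α * χ a = 1 ∧ β * χ (a + 1) = 1}
      = ∑ a : F, (if α * χ a = 1 then (e : R) else 0) *
          (if β * χ (a + 1) = 1 then (e : R) else 0) := by
        simp only [card_filter, Nat.cast_sum, mul_sum, ite_and]
        refine sum_congr rfl fun a _ ↦ ?_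
        split_ifs <;> simp [sq]
    _ = ∑ u : F, (∑ m ∈ range e, α ^ m * (χ ^ m) (-u)) *
          ∑ n ∈ range e, β ^ n * (χ ^ n) (1 - u) := by
        rw [← Equiv.sum_comp (Equiv.neg F)]
        simp only [sum_range_pow_mul_pow_apply hχ hα, sum_range_pow_mul_pow_apply hχ hβ,
          Equiv.neg_apply, neg_add_eq_sub]
    _ = ∑ u : F, ∑ m ∈ range e, ∑ n ∈ range e,
          α ^ m * β ^ n * (χ ^ m) (-1) * ((χ ^ m) u * (χ ^ n) (1 - u)) := by
        simp only [sum_mul_sum]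
        refine sum_congr rfl fun u _ ↦ sum_congr rfl fun m _ ↦ sum_congr rfl fun n _ ↦ ?_
        rw [← neg_one_mul u, map_mul]
        ring
    _ = _ := by
        simp only [jacobiSum, mul_sum]
        rw [sum_comm]
        exact sum_congr rfl fun m _ ↦ sum_comm

lemma sixteen_mul_card_filter_of_orderOf_eq_four {ζ : R} (hζ : ζ ^ 2 = -1) (hχ : orderOf χ = 4)
    (hneg : χ (-1) = -1) :
    16 * (#{a : F | χ a = 1 ∧ χ (a + 1) = ζ} : R) =
      Fintype.card F + 1 - (jacobiSum χ χ + jacobiSum χ⁻¹ χ⁻¹)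
        + 2 * ζ * (jacobiSum χ χ - jacobiSum χ⁻¹ χ⁻¹) := by
  have h4 : χ ^ 4 = 1 := hχ ▸ pow_orderOf_eq_one χ
  have h1 : χ ≠ 1 := by rintro rfl; simp at hχ
  have h2 : χ ^ 2 ≠ 1 := pow_ne_one_of_lt_orderOf (by norm_num) (by omega)
  have h3 : χ ^ 3 = χ⁻¹ := eq_inv_of_mul_eq_one_left (by rw [← pow_succ, h4])
  have hsq : (χ ^ 2)⁻¹ = χ ^ 2 := inv_eq_of_mul_eq_one_left (by rw [← pow_add, h4])
  have hsq_neg : (χ ^ 2) (-1) = 1 := by rw [MulChar.pow_apply' _ two_ne_zero, hneg]; ring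
  have hinv_neg : χ⁻¹ (-1) = -1 := by rw [MulChar.inv_apply', inv_neg_one, hneg]
  have j22 : jacobiSum (χ ^ 2) (χ ^ 2) = -1 := by
    simpa only [hsq, hsq_neg] using jacobiSum_nontrivial_inv h2
  have j13 : jacobiSum χ χ⁻¹ = 1 := by
    simpa only [hneg, neg_neg] using jacobiSum_nontrivial_inv h1
  have j12 : jacobiSum χ (χ ^ 2) = -jacobiSum χ χ := by
    rw [jacobiSum_self_sq h4, hneg, neg_one_mul]
  have j32 : jacobiSum χ⁻¹ (χ ^ 2) = -jacobiSum χ⁻¹ χ⁻¹ := by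
    rw [← hsq, ← inv_pow, jacobiSum_self_sq (by rw [inv_pow, h4, inv_one]), hinv_neg, neg_one_mul]
  have hcount := sq_mul_card_filter_eq_sum_jacobiSum h4 (one_pow 4)
    (show (-ζ) ^ 4 = 1 by linear_combination (ζ ^ 2 - 1) * hζ)
  have hζ_mul (w : R) : -ζ * w = 1 ↔ w = ζ := by
    constructor <;> intro h
    · linear_combination ζ * h + w * hζ
    · linear_combination (-ζ) * h - hζ
  simp only [sum_range_succ, sum_range_zero, one_mul, hζ_mul, pow_zero, pow_one, h3,
    jacobiSum_one_one, jacobiSum_one_nontrivial h1, jacobiSum_one_nontrivial h2,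
    jacobiSum_one_nontrivial (inv_ne_one.mpr h1), jacobiSum_comm _ (1 : MulChar F R),
    jacobiSum_comm (χ ^ 2) χ, jacobiSum_comm (χ ^ 2) χ⁻¹, jacobiSum_comm χ⁻¹ χ, j22, j13, j12, j32,
    hneg, hsq_neg, hinv_neg, MulChar.one_apply isUnit_one.neg] at hcount
  push_cast at hcount
  linear_combination hcount +
    (-2 + 2 * ζ + jacobiSum χ χ + jacobiSum χ⁻¹ χ⁻¹ + 2 * ζ * jacobiSum χ⁻¹ χ⁻¹) * hζ

end CyclotomicNumbers

lemma sq_eq_neg_one_of_isPrimitiveRoot_four {R : Type*} [CommRing R] [IsDomain R] {ζ : R}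
    (hζ : IsPrimitiveRoot ζ 4) : ζ ^ 2 = -1 :=
  (hζ.pow (by norm_num) (show 4 = 2 * 2 by norm_num)).eq_neg_one_of_two_right

section GaussianPeriods

variable {F R : Type*} [Field F] [Fintype F] [CommRing R] [DecidableEq R]

/-- The Gaussian period `∑ ψ a` over the fibre `{a | χ a = w}` of a multiplicative character. For
`χ` of order `e` and `w` running over the `e`-th roots of unity, these fibres are the cyclotomic
classes of order `e`, so that the periods express the Gauss sums of the powers of `χ`. -/
def gaussPeriod (χ : MulChar F R) (ψ : AddChar F R) (w : R) : R := ∑ a with χ a = w, ψ a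

variable [IsDomain R] {χ : MulChar F R} {ψ : AddChar F R} {ζ : R} {e : ℕ}

lemma gaussSum_pow_eq_sum_gaussPeriod [NeZero e] (hχ : χ ^ e = 1) (hζ : IsPrimitiveRoot ζ e)
    (k : ℕ) :
    gaussSum (χ ^ k) ψ = ∑ j ∈ range e, ζ ^ (j * k) * gaussPeriod χ ψ (ζ ^ j) := by
  simp only [gaussSum, gaussPeriod, sum_filter, mul_sum]
  rw [sum_comm]
  refine sum_congr rfl fun a _ ↦ ?_
  rcases eq_or_ne a 0 with rfl | ha
  · have hζ_ne (j : ℕ) : (0 : R) ≠ ζ ^ j := (pow_ne_zero j (hζ.ne_zero (NeZero.ne e))).symm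
    simp only [MulChar.map_zero, hζ_ne, if_false, mul_zero, zero_mul, sum_const_zero]
  obtain ⟨i, hi, hia⟩ := MulChar.exists_apply_eq_pow hχ hζ ha
  rw [sum_eq_single_of_mem i (mem_range.mpr hi), if_pos hia, pow_mul, ← hia]
  · lift a to Fˣ using ha.isUnit
    rw [MulChar.pow_apply_coe]
  · intro j hj hji
    rw [if_neg, mul_zero]
    exact fun h ↦ hji (hζ.pow_inj (mem_range.mp hj) hi (h.symm.trans hia))

lemma sum_gaussPeriod [NeZero e] (hχ : χ ^ e = 1) (hζ : IsPrimitiveRoot ζ e) (hψ : ψ ≠ 1) :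
    ∑ j ∈ range e, gaussPeriod χ ψ (ζ ^ j) = -1 := by
  simpa only [pow_zero, mul_zero, one_mul, gaussSum_one_left hψ] using
    (gaussSum_pow_eq_sum_gaussPeriod (ψ := ψ) hχ hζ 0).symm

lemma gaussSum_quartic (hχ : χ ^ 4 = 1) (hζ : IsPrimitiveRoot ζ 4) :
    gaussSum χ ψ =
      (gaussPeriod χ ψ (ζ ^ 0) - gaussPeriod χ ψ (ζ ^ 2)) +
        ζ * (gaussPeriod χ ψ (ζ ^ 1) - gaussPeriod χ ψ (ζ ^ 3)) := by
  have h := gaussSum_pow_eq_sum_gaussPeriod (ψ := ψ) hχ hζ 1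
  have hsq := sq_eq_neg_one_of_isPrimitiveRoot_four hζ
  rw [pow_one] at h
  rw [h]
  simp only [sum_range_succ, sum_range_zero]
  linear_combination
    (gaussPeriod χ ψ (ζ ^ 2) + ζ * gaussPeriod χ ψ (ζ ^ 3)) * hsq

lemma gaussSum_inv_quartic (hχ : χ ^ 4 = 1) (hζ : IsPrimitiveRoot ζ 4) :
    gaussSum χ⁻¹ ψ =
      (gaussPeriod χ ψ (ζ ^ 0) - gaussPeriod χ ψ (ζ ^ 2)) -
        ζ * (gaussPeriod χ ψ (ζ ^ 1) - gaussPeriod χ ψ (ζ ^ 3)) := by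
  have hinv : χ⁻¹ = χ ^ 3 := (eq_inv_of_mul_eq_one_left (by rw [← pow_succ, hχ])).symm
  have hsq := sq_eq_neg_one_of_isPrimitiveRoot_four hζ
  rw [hinv, gaussSum_pow_eq_sum_gaussPeriod hχ hζ 3]
  simp only [sum_range_succ, sum_range_zero]
  linear_combination (ζ * gaussPeriod χ ψ (ζ ^ 1) +
    (ζ ^ 4 - ζ ^ 2 + 1) * gaussPeriod χ ψ (ζ ^ 2) +
    ζ * (ζ ^ 6 - ζ ^ 4 + ζ ^ 2 - 1) * gaussPeriod χ ψ (ζ ^ 3)) * hsq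

lemma gaussSum_sq_quartic (hχ : χ ^ 4 = 1) (hζ : IsPrimitiveRoot ζ 4) :
    gaussSum (χ ^ 2) ψ =
      gaussPeriod χ ψ (ζ ^ 0) - gaussPeriod χ ψ (ζ ^ 1) + gaussPeriod χ ψ (ζ ^ 2)
        - gaussPeriod χ ψ (ζ ^ 3) := by
  have hsq := sq_eq_neg_one_of_isPrimitiveRoot_four hζ
  rw [gaussSum_pow_eq_sum_gaussPeriod hχ hζ 2]
  simp only [sum_range_succ, sum_range_zero]
  linear_combination (gaussPeriod χ ψ (ζ ^ 1) +
    (ζ ^ 2 - 1) * gaussPeriod χ ψ (ζ ^ 2) +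
    (ζ ^ 4 - ζ ^ 2 + 1) * gaussPeriod χ ψ (ζ ^ 3)) * hsq

lemma sq_alternating_sum_gaussPeriod (hχ : orderOf χ = 4) (hζ : IsPrimitiveRoot ζ 4)
    (hψ : ψ.IsPrimitive) :
    (gaussPeriod χ ψ (ζ ^ 0) - gaussPeriod χ ψ (ζ ^ 1) + gaussPeriod χ ψ (ζ ^ 2)
        - gaussPeriod χ ψ (ζ ^ 3)) ^ 2 = Fintype.card F := by
  have h4 : χ ^ 4 = 1 := hχ ▸ pow_orderOf_eq_one χ
  have hord : orderOf (χ ^ 2) = 2 := by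
    rw [orderOf_pow_of_dvd two_ne_zero (by simp [hχ]), hχ]
  have h2 : χ ^ 2 ≠ 1 := by intro h; simp [h] at hord
  have hneg : (χ ^ 2) (-1) = 1 := by
    rw [MulChar.pow_apply' _ two_ne_zero, ← map_pow, neg_one_sq, map_one]
  rw [← gaussSum_sq_quartic h4 hζ, sq]
  simpa only [hord, hneg, one_mul, Nat.reduceSub, pow_one] using
    gaussSum_mul_gaussSum_pow_orderOf_sub_one h2 hψ

lemma sq_add_sq_gaussPeriod (hχ : orderOf χ = 4) (hζ : IsPrimitiveRoot ζ 4)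
    (hψ : ψ.IsPrimitive) :
    (gaussPeriod χ ψ (ζ ^ 0) - gaussPeriod χ ψ (ζ ^ 2)) ^ 2 +
      (gaussPeriod χ ψ (ζ ^ 1) - gaussPeriod χ ψ (ζ ^ 3)) ^ 2 = χ (-1) * Fintype.card F := by
  have h4 : χ ^ 4 = 1 := hχ ▸ pow_orderOf_eq_one χ
  have h1 : χ ≠ 1 := by rintro rfl; simp at hχ
  have hinv : χ ^ 3 = χ⁻¹ := eq_inv_of_mul_eq_one_left (by rw [← pow_succ, h4])
  have hmul := gaussSum_mul_gaussSum_pow_orderOf_sub_one h1 hψ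
  rw [hχ, hinv, gaussSum_quartic h4 hζ, gaussSum_inv_quartic h4 hζ] at hmul
  linear_combination hmul + (gaussPeriod χ ψ (ζ ^ 1) - gaussPeriod χ ψ (ζ ^ 3)) ^ 2 *
    sq_eq_neg_one_of_isPrimitiveRoot_four hζ

lemma mul_gaussPeriod_eq_jacobiSum_sub (hχ : orderOf χ = 4) (hζ : IsPrimitiveRoot ζ 4) :
    4 * ζ * ((gaussPeriod χ ψ (ζ ^ 0) - gaussPeriod χ ψ (ζ ^ 2)) *
        (gaussPeriod χ ψ (ζ ^ 1) - gaussPeriod χ ψ (ζ ^ 3))) =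
      (jacobiSum χ χ - jacobiSum χ⁻¹ χ⁻¹) *
        (gaussPeriod χ ψ (ζ ^ 0) - gaussPeriod χ ψ (ζ ^ 1) + gaussPeriod χ ψ (ζ ^ 2)
          - gaussPeriod χ ψ (ζ ^ 3)) := by
  have h4 : χ ^ 4 = 1 := hχ ▸ pow_orderOf_eq_one χ
  have h2 : χ * χ ≠ 1 := by
    rw [← sq]; exact pow_ne_one_of_lt_orderOf (by norm_num) (by omega)
  have hinv : χ⁻¹ * χ⁻¹ = χ * χ := by
    rw [← mul_inv, inv_eq_of_mul_eq_one_left (by rw [← sq, ← sq, ← pow_mul, h4])]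
  have hg := jacobiSum_mul_nontrivial h2 ψ
  have hg' := jacobiSum_mul_nontrivial (hinv ▸ h2) ψ
  rw [← sq, gaussSum_sq_quartic h4 hζ, gaussSum_quartic h4 hζ] at hg
  rw [hinv, ← sq, gaussSum_sq_quartic h4 hζ, gaussSum_inv_quartic h4 hζ] at hg'
  linear_combination hg' - hg

end GaussianPeriods

section PeriodElimination

variable {R : Type*} [CommRing R] {η₀ η₁ η₂ η₃ p y : R}

lemma sq_five_mul_add_nine_eq (hsum : η₀ + η₁ + η₂ + η₃ = -1)
    (halt : (η₀ - η₁ + η₂ - η₃) ^ 2 = p) (hsq : (η₀ - η₂) ^ 2 + (η₁ - η₃) ^ 2 = -p)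
    (hmul : (η₀ - η₂) * (η₁ - η₃) = y * (η₀ - η₁ + η₂ - η₃))
    (hU : η₂ + 2 * η₃ + 3 * η₀ = 0) :
    (5 * p + 9) ^ 2 = 4 * (3 - 4 * y) ^ 2 * p := by
  have hdiff : 2 * ((η₁ - η₃) - (η₀ - η₂)) = (η₀ - η₁ + η₂ - η₃) - 3 := by
    linear_combination 3 * hsum - 2 * hU
  have hsqrt : 5 * p + 9 = 2 * (3 - 4 * y) * (η₀ - η₁ + η₂ - η₃) := by
    linear_combination (-(2 * ((η₁ - η₃) - (η₀ - η₂)) + (η₀ - η₁ + η₂ - η₃) - 3)) * hdiff +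
      4 * hsq - 8 * hmul - halt
  rw [hsqrt]
  linear_combination 4 * (3 - 4 * y) ^ 2 * halt

end PeriodElimination

section PrimitiveRoots

variable {F : Type*} [Field F] [Fintype F] {θ : F}

lemma exists_pow_eq_of_isPrimitiveRoot (hθ : IsPrimitiveRoot θ (Fintype.card F - 1)) {a : F}
    (ha : a ≠ 0) : ∃ n < Fintype.card F - 1, θ ^ n = a :=
  have : NeZero (Fintype.card F - 1) := ⟨Nat.sub_ne_zero_of_lt Fintype.one_lt_card⟩
  hθ.eq_pow_of_pow_eq_one (FiniteField.pow_card_sub_one_eq_one a ha)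

lemma exists_unit_generator (hθ : IsPrimitiveRoot θ (Fintype.card F - 1)) :
    ∃ g : Fˣ, (g : F) = θ ∧ ∀ a : Fˣ, a ∈ Subgroup.zpowers g := by
  obtain ⟨g, rfl⟩ := hθ.isUnit (Nat.sub_ne_zero_of_lt Fintype.one_lt_card)
  refine ⟨g, rfl, fun a ↦ ?_⟩
  obtain ⟨n, -, hn⟩ := exists_pow_eq_of_isPrimitiveRoot hθ a.ne_zero
  exact ⟨n, by ext; simpa using hn⟩

section CommMonoidWithZero

variable {R : Type*} [CommMonoidWithZero R]

lemma exists_mulChar_apply_eq (hθ : IsPrimitiveRoot θ (Fintype.card F - 1)) {ζ : R}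
    (hζ : ζ ^ (Fintype.card F - 1) = 1) : ∃ χ : MulChar F R, χ θ = ζ := by
  classical
  obtain ⟨g, rfl, hg⟩ := exists_unit_generator hθ
  obtain ⟨u, rfl⟩ := IsUnit.of_pow_eq_one hζ (Nat.sub_ne_zero_of_lt Fintype.one_lt_card)
  have hu : u ∈ rootsOfUnity (Fintype.card Fˣ) R := by
    rw [Fintype.card_units, mem_rootsOfUnity']
    exact hζ
  exact ⟨_, MulChar.ofRootOfUnity_spec hu hg⟩

lemma orderOf_mulChar (hθ : IsPrimitiveRoot θ (Fintype.card F - 1)) (χ : MulChar F R) :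
    orderOf χ = orderOf (χ θ) := by
  obtain ⟨g, rfl, hg⟩ := exists_unit_generator hθ
  refine orderOf_eq_orderOf_iff.mpr fun n ↦ ?_
  rw [MulChar.eq_iff hg, MulChar.pow_apply_coe, MulChar.one_apply_coe]

lemma mulChar_apply_neg_one (hθ : IsPrimitiveRoot θ (Fintype.card F - 1))
    (hF : Odd (Fintype.card F)) (χ : MulChar F R) :
    χ (-1) = χ θ ^ ((Fintype.card F - 1) / 2) := by
  have hdiv : (Fintype.card F - 1) / 2 * 2 = Fintype.card F - 1 :=
    Nat.div_mul_cancel (Nat.Odd.sub_odd hF odd_one).two_dvd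
  have hpos : 0 < Fintype.card F - 1 := Nat.sub_pos_of_lt Fintype.one_lt_card
  rw [← (hθ.pow hpos hdiv.symm).eq_neg_one_of_two_right, map_pow]

end CommMonoidWithZero

end PrimitiveRoots

section CyclotomicClasses

variable {p θ : ℕ} [Fact p.Prime] {R : Type*} [CommRing R] [IsDomain R] [DecidableEq R]
  {χ : MulChar (ZMod p) R} {ζ : R} {k : ℕ}

lemma cycD_eq_image_val (hp : 4 ∣ p - 1) (hθ : IsPrimitiveRoot (θ : ZMod p) (p - 1))
    (hζ : IsPrimitiveRoot ζ 4) (hχ : χ θ = ζ) (hk : k < 4) :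
    cycD p θ k = ({a | χ a = ζ ^ k} : Finset (ZMod p)).image ZMod.val := by
  ext t
  simp only [cycD, mem_image, mem_range, mem_filter, mem_univ, true_and]
  constructor
  · rintro ⟨j, -, rfl⟩
    refine ⟨(θ ^ (k + 4 * j) : ℕ), ?_, ZMod.val_natCast _ _⟩
    rw [Nat.cast_pow, map_pow, hχ, pow_add, pow_mul, hζ.pow_eq_one, one_pow, mul_one]
  · rintro ⟨a, ha, rfl⟩
    have ha0 : a ≠ 0 := by
      rintro rfl
      exact pow_ne_zero k (hζ.ne_zero (by norm_num)) (ha.symm.trans (MulChar.map_zero χ))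
    obtain ⟨n, hn, rfl⟩ := exists_pow_eq_of_isPrimitiveRoot (by rwa [ZMod.card p]) ha0
    rw [ZMod.card p] at hn
    rw [map_pow, hχ, ← pow_mod_orderOf, ← hζ.eq_orderOf] at ha
    have hnk : n % 4 = k := hζ.pow_inj (Nat.mod_lt n four_pos) hk ha
    refine ⟨n / 4, by omega, ?_⟩
    rw [show k + 4 * (n / 4) = n by omega, ← ZMod.val_natCast, Nat.cast_pow]

lemma intCast_eta4 (hp : 4 ∣ p - 1) (hθ : IsPrimitiveRoot (θ : ZMod p) (p - 1))
    (hζ : IsPrimitiveRoot ζ 4) (hχ : χ θ = ζ) (h4 : (4 : R) ^ p = 1) (hk : k < 4) :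
    (eta4 p θ k : R) = gaussPeriod χ (AddChar.zmodChar p h4) (ζ ^ k) := by
  rw [eta4, cycD_eq_image_val hp hθ hζ hχ hk, sum_image (ZMod.val_injective p).injOn, gaussPeriod]
  push_cast
  simp only [AddChar.zmodChar_apply]

lemma card_filter_cycD (hp : 4 ∣ p - 1) (hθ : IsPrimitiveRoot (θ : ZMod p) (p - 1))
    (hζ : IsPrimitiveRoot ζ 4) (hχ : χ θ = ζ) :
    #{a ∈ cycD p θ 0 | (a + 1) % p ∈ cycD p θ 1} =
      #{a : ZMod p | χ a = 1 ∧ χ (a + 1) = ζ} := by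
  have : Fact (1 < p) := ⟨(Fact.out : p.Prime).one_lt⟩
  have hval (a : ZMod p) : (a.val + 1) % p = (a + 1).val := by rw [ZMod.val_add, ZMod.val_one]
  rw [cycD_eq_image_val hp hθ hζ hχ (by norm_num), cycD_eq_image_val hp hθ hζ hχ (by norm_num),
    filter_image, card_image_of_injective _ (ZMod.val_injective p), filter_filter]
  simp only [hval, (ZMod.val_injective p).mem_finset_image, mem_filter, mem_univ, true_and,
    pow_zero, pow_one]

end CyclotomicClasses

section QuarticCharacters

lemma isPrimitiveRoot_sqrtd_neg_one : IsPrimitiveRoot (Zsqrtd.sqrtd : GaussianInt) 4 :=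
  .mk_of_lt _ four_pos (by decide) fun l _ _ ↦ by interval_cases l <;> decide

lemma eq_two_mul_of_sum_two_squares {p : ℕ} (hp : p.Prime) {x y X Y : ℤ} (hx : x % 4 = 1)
    (hxy : (p : ℤ) = x ^ 2 + 4 * y ^ 2) (hXY : (p : ℤ) = X ^ 2 + Y ^ 2)
    (hlin : X + 2 * Y = 4 * y - x) : Y = 2 * y := by
  have hfactor : (Y - 2 * y) * (5 * Y - (6 * y - 4 * x)) = 0 := by
    linear_combination hxy - hXY - (X + 4 * y - x - 2 * Y) * hlin
  rcases mul_eq_zero.mp hfactor with h | h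
  · exact sub_eq_zero.mp h
  -- On the other branch `5 ∣ x + y`, so that `p = 5`, `x = 1` and `y = -1`.
  obtain ⟨c, rfl⟩ : ∃ c, y = 5 * c - x := ⟨(x + y) / 5, by omega⟩
  have h5 : 5 ∣ p := by
    refine Int.natCast_dvd_natCast.mp ⟨x ^ 2 - 8 * c * x + 20 * c ^ 2, ?_⟩
    rw [hxy]
    push_cast
    ring
  have hp5 : p = 5 := ((Nat.prime_dvd_prime_iff_eq Nat.prime_five hp).mp h5).symm
  rw [hp5] at hxy
  push_cast at hxy
  have hx1 : x = 1 := by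
    have : -3 < x := by nlinarith [sq_nonneg (5 * c - x)]
    have : x < 3 := by nlinarith [sq_nonneg (5 * c - x)]
    omega
  have hc : c * (5 * c - 2) = 0 := by subst hx1; linarith
  rcases mul_eq_zero.mp hc with hc | hc <;> omega

variable {p θ : ℕ} [Fact p.Prime] {R : Type*} [CommRing R] [IsDomain R]

lemma mulChar_quartic_neg_one {χ : MulChar (ZMod p) R} {ζ : R} (hp : p % 8 = 5)
    (hθ : IsPrimitiveRoot (θ : ZMod p) (p - 1)) (hζ : IsPrimitiveRoot ζ 4) (hχ : χ θ = ζ) :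
    χ (-1) = -1 := by
  have hodd : Odd (Fintype.card (ZMod p)) := by rw [ZMod.card p, Nat.odd_iff]; omega
  rw [mulChar_apply_neg_one (by rwa [ZMod.card p]) hodd, hχ, ZMod.card p,
    show (p - 1) / 2 = 4 * (p / 8) + 2 by omega, pow_add, pow_mul, hζ.pow_eq_one, one_pow, one_mul,
    sq_eq_neg_one_of_isPrimitiveRoot_four hζ]

lemma im_jacobiSum_eq {χ : MulChar (ZMod p) GaussianInt} (hχ : orderOf χ = 4)
    (hneg : χ (-1) = -1) {x y : ℤ} (hx : x % 4 = 1) (hxy : (p : ℤ) = x ^ 2 + 4 * y ^ 2)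
    (hy : 16 * (#{a | χ a = 1 ∧ χ (a + 1) = Zsqrtd.sqrtd} : ℤ) = p + 1 + 2 * x - 8 * y) :
    (jacobiSum χ χ).im = 2 * y := by
  have h1 : χ ≠ 1 := by rintro rfl; simp at hχ
  have h2 : χ * χ ≠ 1 := by
    rw [← sq]; exact pow_ne_one_of_lt_orderOf (by norm_num) (by omega)
  have hnorm := norm_jacobiSum h1 h1 h2
  have hcount := sixteen_mul_card_filter_of_orderOf_eq_four
    (sq_eq_neg_one_of_isPrimitiveRoot_four isPrimitiveRoot_sqrtd_neg_one) hχ hneg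
  rw [jacobiSum_inv_inv_eq_star, ZMod.card p] at hcount
  have hre : 16 * (#{a | χ a = 1 ∧ χ (a + 1) = Zsqrtd.sqrtd} : ℤ) =
      p + 1 - 2 * (jacobiSum χ χ).re - 4 * (jacobiSum χ χ).im := by
    have h := congrArg Zsqrtd.re hcount
    simp only [Zsqrtd.re_mul, Zsqrtd.im_mul, Zsqrtd.re_add, Zsqrtd.re_sub, Zsqrtd.im_sub,
      Zsqrtd.re_star, Zsqrtd.im_star, Zsqrtd.re_sqrtd, Zsqrtd.im_sqrtd, Zsqrtd.re_natCast,
      Zsqrtd.im_natCast, Zsqrtd.re_ofNat, Zsqrtd.im_ofNat, Zsqrtd.re_one] at h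
    push_cast at h
    linarith
  rw [Zsqrtd.norm_def, ZMod.card p] at hnorm
  refine eq_two_mul_of_sum_two_squares Fact.out hx hxy (X := (jacobiSum χ χ).re) ?_ ?_ <;> linarith

end QuarticCharacters

section Reduction

variable {p θ : ℕ} [Fact p.Prime] {R : Type*} [CommRing R] [IsDomain R]

lemma exists_mulChar_jacobiSum_sub_eq {ζ : R} (hζ : IsPrimitiveRoot ζ 4) (hp : p % 8 = 5) {x y : ℤ}
    (hx : x % 4 = 1) (hxy : (p : ℤ) = x ^ 2 + 4 * y ^ 2)
    (hθ : IsPrimitiveRoot (θ : ZMod p) (p - 1))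
    (hy : 16 * (#{a ∈ cycD p θ 0 | (a + 1) % p ∈ cycD p θ 1} : ℤ) = p + 1 + 2 * x - 8 * y) :
    ∃ χ : MulChar (ZMod p) R, χ θ = ζ ∧
      jacobiSum χ χ - jacobiSum χ⁻¹ χ⁻¹ = 4 * ζ * y := by
  have h4 : 4 ∣ p - 1 := by omega
  have hi := isPrimitiveRoot_sqrtd_neg_one
  have hθ' : IsPrimitiveRoot (θ : ZMod p) (Fintype.card (ZMod p) - 1) := by rwa [ZMod.card p]
  obtain ⟨χ, hχ⟩ := exists_mulChar_apply_eq hθ' (ζ := (Zsqrtd.sqrtd : GaussianInt))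
    (by rwa [ZMod.card p, hi.pow_eq_one_iff_dvd])
  have hord : orderOf χ = 4 := by rw [orderOf_mulChar hθ', hχ, ← hi.eq_orderOf]
  rw [card_filter_cycD h4 hθ hi hχ] at hy
  have him := im_jacobiSum_eq hord (mulChar_quartic_neg_one hp hθ hi hχ) hx hxy hy
  have hζ_mul : ζ * ζ = ((-1 : ℤ) : R) := by
    rw [← sq, sq_eq_neg_one_of_isPrimitiveRoot_four hζ]; push_cast; rfl
  let f : GaussianInt →+* R := Zsqrtd.lift ⟨ζ, hζ_mul⟩
  have hf (z : GaussianInt) : f z = z.re + z.im * ζ := rfl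
  refine ⟨χ.ringHomComp f, ?_, ?_⟩
  · rw [MulChar.ringHomComp_apply, hχ, hf, Zsqrtd.re_sqrtd, Zsqrtd.im_sqrtd]
    push_cast
    ring
  · rw [MulChar.ringHomComp_inv, jacobiSum_ringHomComp, jacobiSum_ringHomComp,
      jacobiSum_inv_inv_eq_star, hf, hf, Zsqrtd.re_star, Zsqrtd.im_star, him]
    push_cast
    ring

lemma sq_five_mul_add_nine_eq_of_eta4 {ζ : R} (hζ : IsPrimitiveRoot ζ 4)
    (h4 : IsPrimitiveRoot (4 : R) p) (hp : p % 8 = 5) {x y : ℤ} (hx : x % 4 = 1)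
    (hxy : (p : ℤ) = x ^ 2 + 4 * y ^ 2) (hθ : IsPrimitiveRoot (θ : ZMod p) (p - 1))
    (hy : 16 * (#{a ∈ cycD p θ 0 | (a + 1) % p ∈ cycD p θ 1} : ℤ) = p + 1 + 2 * x - 8 * y)
    (hU : (eta4 p θ 2 + 2 * eta4 p θ 3 + 3 * eta4 p θ 0 : R) = 0) :
    (5 * p + 9 : R) ^ 2 = 4 * (3 - 4 * y) ^ 2 * p := by
  classical
  obtain ⟨χ, hχ, hJ⟩ := exists_mulChar_jacobiSum_sub_eq hζ hp hx hxy hθ hy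
  have hdvd : 4 ∣ p - 1 := by omega
  have hord : orderOf χ = 4 := by
    rw [orderOf_mulChar (by rwa [ZMod.card p]), hχ, ← hζ.eq_orderOf]
  have hψ : (AddChar.zmodChar p h4.pow_eq_one).IsPrimitive :=
    AddChar.zmodChar_primitive_of_primitive_root p h4
  have hsum := sum_gaussPeriod (hord ▸ pow_orderOf_eq_one χ) hζ
    (by simpa only [AddChar.mulShift_one] using hψ one_ne_zero)
  have halt := sq_alternating_sum_gaussPeriod hord hζ hψ
  have hsq := sq_add_sq_gaussPeriod hord hζ hψ
  have hmul := mul_gaussPeriod_eq_jacobiSum_sub (ψ := AddChar.zmodChar p h4.pow_eq_one) hord hζ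
  simp only [sum_range_succ, sum_range_zero, zero_add] at hsum
  rw [mulChar_quartic_neg_one hp hθ hζ hχ, neg_one_mul] at hsq
  rw [ZMod.card p] at halt hsq
  rw [hJ, mul_assoc (4 * ζ)] at hmul
  have h4ζ : 4 * ζ ≠ 0 :=
    mul_ne_zero (h4.ne_zero (NeZero.ne p)) (hζ.ne_zero four_ne_zero)
  refine sq_five_mul_add_nine_eq hsum halt hsq (mul_left_cancel₀ h4ζ hmul) ?_
  simpa only [← intCast_eta4 hdvd hθ hζ hχ h4.pow_eq_one, Nat.reduceLT] using hU

variable {q : ℕ} [Fact q.Prime]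

lemma natCast_dvd_of_dvd_eta4 (hord : orderOf (4 : ZMod q) = p) (hp : p % 8 = 5) {x y : ℤ}
    (hx : x % 4 = 1) (hxy : (p : ℤ) = x ^ 2 + 4 * y ^ 2)
    (hθ : IsPrimitiveRoot (θ : ZMod p) (p - 1))
    (hy : 16 * (#{a ∈ cycD p θ 0 | (a + 1) % p ∈ cycD p θ 1} : ℤ) = p + 1 + 2 * x - 8 * y)
    (hU : (q : ℤ) ∣ eta4 p θ 2 + 2 * eta4 p θ 3 + 3 * eta4 p θ 0) :
    (q : ℤ) ∣ (5 * p + 9) ^ 2 - 4 * (3 - 4 * y) ^ 2 * p := by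
  have h4 : IsPrimitiveRoot (4 : AlgebraicClosure (ZMod q)) p := by
    have h := IsPrimitiveRoot.orderOf (4 : ZMod q)
    rw [hord] at h
    simpa only [map_ofNat] using
      h.map_of_injective (algebraMap (ZMod q) (AlgebraicClosure (ZMod q))).injective
  have : NeZero ((4 : ℕ) : AlgebraicClosure (ZMod q)) :=
    ⟨by exact_mod_cast h4.ne_zero (NeZero.ne p)⟩
  obtain ⟨ζ, hζ⟩ := HasEnoughRootsOfUnity.exists_primitiveRoot (AlgebraicClosure (ZMod q)) 4
  rw [← CharP.intCast_eq_zero_iff (AlgebraicClosure (ZMod q))] at hU ⊢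
  push_cast at hU ⊢
  rw [sub_eq_zero]
  exact sq_five_mul_add_nine_eq_of_eta4 hζ h4 hp hx hxy hθ hy hU

end Reduction

section Order

variable {p q : ℕ} [Fact q.Prime]

lemma orderOf_four_eq (hp : p.Prime) (hq : 3 < q) (h : (q : ℤ) ∣ 4 ^ p - 1) :
    orderOf (4 : ZMod q) = p := by
  have := Fact.mk hp
  rw [← ZMod.intCast_zmod_eq_zero_iff_dvd] at h
  push_cast at h
  refine orderOf_eq_prime (sub_eq_zero.mp h) fun h41 ↦ ?_
  have h3 : ((3 : ℕ) : ZMod q) = 0 := by push_cast; linear_combination h41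
  exact (Nat.le_of_dvd three_pos ((ZMod.natCast_eq_zero_iff 3 q).mp h3)).not_gt hq

lemma exists_eq_one_add_two_mul_orderOf (hq : q ≠ 2) {a : ZMod q} (ha : Odd (orderOf a)) :
    ∃ k, q = 1 + 2 * k * orderOf a := by
  have ha0 : a ≠ 0 := by rintro rfl; simp at ha
  have hdvd : 2 * orderOf a ∣ q - 1 :=
    (Nat.coprime_two_left.mpr ha).mul_dvd_of_dvd_of_dvd
      (((Fact.out : q.Prime).odd_of_ne_two hq).tsub_odd odd_one).two_dvd
      (ZMod.orderOf_dvd_card_sub_one ha0)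
  obtain ⟨k, hk⟩ := hdvd
  have := (Fact.out : q.Prime).one_lt
  exact ⟨k, by rw [mul_right_comm]; omega⟩

lemma ne_one_add_four_mul_of_four_pow_eq_one (hp : Odd p) (h : (4 : ZMod q) ^ p = 1) :
    q ≠ 1 + 4 * p := by
  intro hq
  have hp2 : p % 2 = 1 := Nat.odd_iff.mp hp
  have h2 : (2 : ZMod q) ≠ 0 := by
    intro h2
    rw [show (4 : ZMod q) = 2 * 2 by norm_num, h2, mul_zero, zero_pow (by omega)] at h
    exact zero_ne_one h
  have hsq : IsSquare (2 : ZMod q) := by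
    rw [ZMod.euler_criterion q h2, show q / 2 = 2 * p by omega, pow_mul]
    norm_num [h]
  have := (ZMod.exists_sq_eq_two_iff (p := q) (by omega)).mp hsq
  omega

end Order

section Arithmetic

variable {p k j z : ℤ}

lemma exists_cofactor (hp : p % 8 = 5) (hz : Odd z)
    (h : 1 + 2 * k * p ∣ (5 * p + 9) ^ 2 - 4 * z ^ 2 * p) :
    ∃ j, j % 8 = 3 ∧ 25 * p + 90 - 4 * z ^ 2 = j * (1 + 2 * k * p) + 162 * k := by
  obtain ⟨m, hm⟩ := h
  -- `m ≡ 81 (mod p)`, and `j` is the quotient `(m - 81) / p`.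
  obtain ⟨j, hj⟩ : ∃ j, j = 25 * p + 90 - 4 * z ^ 2 - 2 * k * m := ⟨_, rfl⟩
  have hmj : m = 81 + p * j := by rw [hj]; linear_combination -hm
  have hE : 25 * p + 90 - 4 * z ^ 2 = j * (1 + 2 * k * p) + 162 * k := by
    linear_combination -hj + 2 * k * hmj
  refine ⟨j, ?_, hE⟩
  obtain ⟨r, rfl⟩ : ∃ r, p = 8 * r + 5 := ⟨p / 8, by omega⟩
  obtain ⟨s, rfl⟩ := hz
  have hdvd : 2 ^ 3 ∣ (1 + 2 * k) * (j - 3) :=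
    ⟨25 * r + 26 - 2 * s ^ 2 - 2 * s - 2 * k * r * j - k * j - 21 * k, by linear_combination -hE⟩
  have hcop : IsCoprime (2 ^ 3 : ℤ) (1 + 2 * k) := IsCoprime.pow_left ⟨-k, 1, by ring⟩
  have := hcop.dvd_of_dvd_mul_left hdvd
  omega

lemma sq_emod_three (z : ℤ) : z ^ 2 % 3 = 0 ∨ z ^ 2 % 3 = 1 := by
  have h : z % 3 = 0 ∨ z % 3 = 1 ∨ z % 3 = 2 := by omega
  rcases h with h | h | h <;> simp [sq, Int.mul_emod, h]

lemma three_dvd_or_seven_dvd_of_cofactor_eq_three (hp : ¬ 3 ∣ p) (hk : k = 1 ∨ k = 3 ∨ k = 4)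
    (hE : 25 * p + 90 - 4 * z ^ 2 = 3 * (1 + 2 * k * p) + 162 * k) :
    3 ∣ 1 + 2 * k * p ∨ 7 ∣ 1 + 2 * k * p := by
  have hz := sq_emod_three z
  rcases hk with rfl | rfl | rfl
  · left; omega
  · right
    have h7 : 7 ∣ z := Int.Prime.dvd_pow' (by norm_num) (show ((7 : ℕ) : ℤ) ∣ z ^ 2 by omega)
    obtain ⟨w, rfl⟩ := h7
    rw [mul_pow] at hE
    omega
  · left; omega

lemma eq_of_cofactor_pos (hp : 0 < p) (hk : 0 < k) (hj : j % 8 = 3) (hj0 : 0 < j)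
    (hE : 25 * p + 90 - 4 * z ^ 2 = j * (1 + 2 * k * p) + 162 * k) :
    j = 3 ∧ k ≤ 4 ∨ j = 11 ∧ k = 1 := by
  have hkj : k * j ≤ 12 := by
    by_contra! h
    nlinarith [sq_nonneg z]
  have hj12 : j ≤ 12 := by nlinarith
  obtain rfl | rfl : j = 3 ∨ j = 11 := by omega
  · left; omega
  · right; omega

lemma le_of_cofactor_neg {x y : ℤ} (hx : x ≠ 0) (hxy : p = x ^ 2 + 4 * y ^ 2) (hk : 0 < k)
    (hj : j ≤ -5) (hE : 25 * p + 90 - 4 * (3 - 4 * y) ^ 2 = j * (1 + 2 * k * p) + 162 * k) :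
    p ≤ 21 := by
  have hx_sq : 0 < x ^ 2 := by positivity
  have hzb : 4 * (3 - 4 * y) ^ 2 ≤ 18 * p + 306 := by nlinarith [sq_nonneg (y + 6)]
  by_contra! hp
  nlinarith [mul_nonneg (mul_nonneg hk.le (by omega : 0 ≤ p)) (by omega : 0 ≤ -5 - j)]

end Arithmetic

section PrimeDivisors

variable {p : ℕ} {x y : ℤ}

lemma dvd_thirty_three_of_le {d : ℤ} (hp8 : p % 8 = 5) (hp : p ≤ 20)
    (hxy : (p : ℤ) = x ^ 2 + 4 * y ^ 2)
    (hD : d ∣ (5 * p + 9) ^ 2 - 4 * (3 - 4 * y) ^ 2 * p) (h4 : d ∣ 4 ^ p - 1) : d ∣ 33 := by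
  have hy : y ^ 2 < 2 ^ 2 := by
    have := sq_nonneg x
    omega
  obtain ⟨hy1, hy2⟩ := abs_lt.mp (abs_lt_of_sq_lt_sq hy two_pos.le)
  refine (Int.dvd_coe_gcd hD h4).trans ?_
  obtain rfl | rfl : p = 5 ∨ p = 13 := by omega
  all_goals interval_cases y <;> norm_num

lemma cofactor_ne_three {q k : ℕ} {z : ℤ} (hp : p.Prime) (hp3 : p ≠ 3) (hq : q.Prime)
    (hq3 : 3 < q) (hqk : q = 1 + 2 * k * p) (hk : k = 1 ∨ k = 3 ∨ k = 4) :
    25 * p + 90 - 4 * z ^ 2 ≠ 3 * (1 + 2 * k * p : ℤ) + 162 * k := by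
  intro hE
  have hp_three : ¬ 3 ∣ p := by
    rwa [Nat.prime_dvd_prime_iff_eq Nat.prime_three hp, eq_comm]
  have hdvd := three_dvd_or_seven_dvd_of_cofactor_eq_three (p := p) (k := k)
    (by exact_mod_cast hp_three) (by exact_mod_cast hk) hE
  norm_cast at hdvd
  rw [← hqk, Nat.prime_dvd_prime_iff_eq Nat.prime_three hq,
    Nat.prime_dvd_prime_iff_eq (by norm_num) hq] at hdvd
  have hp2 := hp.two_le
  clear hE
  rcases hk with rfl | rfl | rfl <;> omega

lemma eq_eleven_or_eq_one_add_two_mul {q k : ℕ} (hp : p.Prime) (hp8 : p % 8 = 5) (hq : q.Prime)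
    (hq3 : 3 < q) (hqk : q = 1 + 2 * k * p) (hk : k ≠ 2) (hx : x ≠ 0)
    (hxy : (p : ℤ) = x ^ 2 + 4 * y ^ 2)
    (hD : (q : ℤ) ∣ (5 * p + 9) ^ 2 - 4 * (3 - 4 * y) ^ 2 * p) (h4 : (q : ℤ) ∣ 4 ^ p - 1) :
    (q : ℤ) = 11 ∨ (q : ℤ) = 1 + 2 * p ∧ 3 * (p : ℤ) = 4 * (3 - 4 * y) ^ 2 + 83 := by
  have hqk' : (q : ℤ) = 1 + 2 * k * p := by exact_mod_cast hqk
  have hk0 : 0 < k := by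
    rw [pos_iff_ne_zero]
    rintro rfl
    omega
  obtain ⟨j, hj, hE⟩ := exists_cofactor (k := k) (by omega) ⟨1 - 2 * y, by ring⟩ (hqk' ▸ hD)
  rcases lt_or_ge 0 j with hj0 | hj0
  · rcases eq_of_cofactor_pos (by omega) (by omega) hj hj0 hE with ⟨rfl, hk4⟩ | ⟨rfl, hk1⟩
    · exact absurd hE (cofactor_ne_three hp (by omega) hq hq3 hqk (by omega))
    · right
      rw [hk1] at hE hqk'
      constructor <;> linarith
  · left
    have hp21 : (p : ℤ) ≤ 21 := le_of_cofactor_neg hx hxy (by omega) (by omega) hE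
    have hp_ne : p ≠ 21 := by rintro rfl; norm_num at hp
    have hdvd : q ∣ 3 * 11 := by exact_mod_cast dvd_thirty_three_of_le hp8 (by omega) hxy hD h4
    rw [hq.dvd_mul, Nat.prime_dvd_prime_iff_eq hq Nat.prime_three,
      Nat.prime_dvd_prime_iff_eq hq (by norm_num)] at hdvd
    omega

end PrimeDivisors

theorem lemma6
    (p : ℕ) (hp : p.Prime) (hp8 : p % 8 = 5)
    (x y : ℤ) (hx : x % 4 = 1) (hxy : (p : ℤ) = x ^ 2 + 4 * y ^ 2)
    (θ : ℕ) (hθ : IsPrimitiveRoot (θ : ZMod p) (p - 1))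
    (hy : 16 * (((cycD p θ 0).filter (fun a => (a + 1) % p ∈ cycD p θ 1)).card : ℤ)
        = (p : ℤ) + 1 + 2 * x - 8 * y)
    (d : ℤ) (hd : Prime d) (hd3 : 3 < d)
    (hdvd : d ∣ (Int.gcd (eta4 p θ 2 + 2 * eta4 p θ 3 + 3 * eta4 p θ 0) (((4 : ℤ) ^ p - 1) / 3) : ℤ)) :
    d = 11 ∨ (d = 1 + 2 * (p : ℤ) ∧ 3 * (p : ℤ) = 4 * (3 - 4 * y) ^ 2 + 83) := by
  obtain ⟨q, rfl⟩ := Int.eq_ofNat_of_zero_le (by omega : 0 ≤ d)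
  have hq : q.Prime := Nat.prime_iff_prime_int.mpr hd
  have hq3 : 3 < q := by exact_mod_cast hd3
  have := Fact.mk hp
  have := Fact.mk hq
  obtain ⟨hU, h4⟩ := Int.dvd_coe_gcd_iff.mp hdvd
  have h4p : (q : ℤ) ∣ 4 ^ p - 1 :=
    h4.trans (Int.ediv_dvd_of_dvd (by simpa using sub_dvd_pow_sub_pow (4 : ℤ) 1 p))
  have hord : orderOf (4 : ZMod q) = p := orderOf_four_eq hp hq3 h4p
  have hodd : Odd p := Nat.odd_iff.mpr (by omega)
  obtain ⟨k, hk⟩ := exists_eq_one_add_two_mul_orderOf (by omega) (hord.symm ▸ hodd)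
  rw [hord] at hk
  have hk2 : k ≠ 2 := by
    rintro rfl
    exact ne_one_add_four_mul_of_four_pow_eq_one hodd (hord ▸ pow_orderOf_eq_one _) hk
  exact eq_eleven_or_eq_one_add_two_mul hp hp8 hq hq3 hk hk2 (by omega) hxy
    (natCast_dvd_of_dvd_eta4 hord hp8 hx hxy hθ hy hU) h4p
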